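/- Let 1 ≤ r ≤ q < ∞ and 1 ≤ p ≤ q, and let E₁, E₂, F be Banach spaces. Suppose there exist constants C₁, C₂ ≥ 0 such that: (i) every continuous linear operator u : E₁ → ℓ_q(F) is absolutely (q;r)-summing with ( Σ_j ‖u(x_j)‖_{ℓ_q(F)}^q )^{1/q} ≤ C₁ · ‖u‖ · ‖(x_j)‖_{w,r} for every weakly r-summable sequence (x_j) in E₁; and (ii) every continuous linear operator v : E₂ → F is absolutely (q;p)-summing with ( Σ_k ‖v(y_k)‖^q )^{1/q} ≤ C₂ · ‖v‖ · ‖(y_k)‖_{w,p} for every weakly p-summable sequence (y_k) in E₂. Then every continuous bilinear operator A : E₁ × E₂ → F is multiple (q;r,p)-summing, and moreover ( Σ_{j=0}^∞ Σ_{k=0}^∞ ‖A(x_j, y_k)‖^q )^{1/q} ≤ C₁ · C₂ · ‖A‖ · ‖(x_j)‖_{w,r} · ‖(y_k)‖_{w,p} for every weakly r-summable sequence (x_j) in E₁ and every weakly p-summable sequence (y_k) in E₂. -/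

import Mathlib

/-!
For fixed `y`, hypothesis (ii) applied to the operators `A a : E₂ → F` says that
`a ↦ (A a (y k))_k` is a bounded linear operator `u : E₁ → ℓ_q(F)` with
`‖u‖ ≤ C₂ * ‖A‖ * weakNorm 𝕜 p y`.  Since `‖u (x j)‖ ^ q = ∑' k, ‖A (x j) (y k)‖ ^ q`,
hypothesis (i) applied to `u` and `x` is exactly the claim.
-/

/-- The weak `ℓ_p` norm of a sequence `x` in a normed space `E` over `𝕜`:
the supremum over functionals `φ` in the closed unit ball of the dual of
`(∑_j ‖φ(x_j)‖^p)^(1/p)`. -/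
noncomputable def weakNorm (𝕜 : Type*) [RCLike 𝕜] {E : Type*} [NormedAddCommGroup E]
    [NormedSpace 𝕜 E] (p : ℝ) (x : ℕ → E) : ℝ :=
  ⨆ φ : {φ : E →L[𝕜] 𝕜 // ‖φ‖ ≤ 1}, (∑' j, ‖φ.1 (x j)‖ ^ p) ^ (1 / p)

/-- A sequence `x` in a normed space `E` over `𝕜` is weakly `p`-summable if
`(φ(x_j))_j ∈ ℓ_p` for every continuous linear functional `φ`. -/
def WeaklySummable (𝕜 : Type*) [RCLike 𝕜] {E : Type*} [NormedAddCommGroup E]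
    [NormedSpace 𝕜 E] (p : ℝ) (x : ℕ → E) : Prop :=
  ∀ φ : E →L[𝕜] 𝕜, Summable fun j => ‖φ (x j)‖ ^ p

lemma weakNorm_nonneg (𝕜 : Type*) [RCLike 𝕜] {E : Type*} [NormedAddCommGroup E]
    [NormedSpace 𝕜 E] (p : ℝ) (x : ℕ → E) : 0 ≤ weakNorm 𝕜 p x :=
  Real.iSup_nonneg fun _ =>
    Real.rpow_nonneg (tsum_nonneg fun _ => Real.rpow_nonneg (norm_nonneg _) _) _

/-- a coincidence theorem. If every operator `E₁ → ℓ_q(F)` is absolutely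
`(q;r)`-summing with uniform constant `C₁` and every operator `E₂ → F` is absolutely
`(q;p)`-summing with uniform constant `C₂`, then every continuous bilinear operator
`A : E₁ × E₂ → F` is multiple `(q;r,p)`-summing with constant `C₁·C₂·‖A‖`. -/
theorem statement9 {𝕜 E₁ E₂ F : Type*} [RCLike 𝕜]
    [NormedAddCommGroup E₁] [NormedSpace 𝕜 E₁] [CompleteSpace E₁]
    [NormedAddCommGroup E₂] [NormedSpace 𝕜 E₂] [CompleteSpace E₂]
    [NormedAddCommGroup F] [NormedSpace 𝕜 F] [CompleteSpace F]
    (q r p : ℝ) (hr : 1 ≤ r) (hrq : r ≤ q) (hp : 1 ≤ p) (hpq : p ≤ q)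
    [Fact (1 ≤ ENNReal.ofReal q)]
    (C₁ C₂ : ℝ) (hC₁ : 0 ≤ C₁) (hC₂ : 0 ≤ C₂)
    (h₁ : ∀ (u : E₁ →L[𝕜] lp (fun _ : ℕ => F) (ENNReal.ofReal q)) (x : ℕ → E₁),
      WeaklySummable 𝕜 r x →
      (Summable fun j => ‖u (x j)‖ ^ q) ∧
        (∑' j, ‖u (x j)‖ ^ q) ^ (1 / q) ≤ C₁ * ‖u‖ * weakNorm 𝕜 r x)
    (h₂ : ∀ (v : E₂ →L[𝕜] F) (y : ℕ → E₂),
      WeaklySummable 𝕜 p y →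
      (Summable fun k => ‖v (y k)‖ ^ q) ∧
        (∑' k, ‖v (y k)‖ ^ q) ^ (1 / q) ≤ C₂ * ‖v‖ * weakNorm 𝕜 p y) :
    ∀ (A : E₁ →L[𝕜] E₂ →L[𝕜] F) (x : ℕ → E₁) (y : ℕ → E₂),
      WeaklySummable 𝕜 r x → WeaklySummable 𝕜 p y →
      (Summable fun jk : ℕ × ℕ => ‖A (x jk.1) (y jk.2)‖ ^ q) ∧
        (∑' j, ∑' k, ‖A (x j) (y k)‖ ^ q) ^ (1 / q)
          ≤ C₁ * C₂ * ‖A‖ * weakNorm 𝕜 r x * weakNorm 𝕜 p y := by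
  intro A x y hx hy
  have hq : 0 < q := by linarith
  have hqr : (ENNReal.ofReal q).toReal = q := ENNReal.toReal_ofReal hq.le
  have hq' : 0 < (ENNReal.ofReal q).toReal := by rwa [hqr]
  have hmem : ∀ a : E₁, Memℓp (fun k => A a (y k)) (ENNReal.ofReal q) := fun a =>
    memℓp_gen (by simpa only [hqr] using (h₂ (A a) y hy).1)
  let L : E₁ →ₗ[𝕜] lp (fun _ : ℕ => F) (ENNReal.ofReal q) :=
    { toFun := fun a => ⟨fun k => A a (y k), hmem a⟩
      map_add' := fun a b => by
        ext k
        change A (a + b) (y k) = A a (y k) + A b (y k)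
        simp
      map_smul' := fun c a => by
        ext k
        simp }
  have hLnorm : ∀ a, ‖L a‖ = (∑' k, ‖A a (y k)‖ ^ q) ^ (1 / q) := fun a => by
    rw [lp.norm_eq_tsum_rpow hq', hqr]
    rfl
  have hLpow : ∀ a, ‖L a‖ ^ q = ∑' k, ‖A a (y k)‖ ^ q := fun a => by
    rw [hLnorm, one_div, Real.rpow_inv_rpow
      (tsum_nonneg fun _ => Real.rpow_nonneg (norm_nonneg _) _) hq.ne']
  have hwx := weakNorm_nonneg 𝕜 r x
  have hwy := weakNorm_nonneg 𝕜 p y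
  have hbound : ∀ a, ‖L a‖ ≤ (C₂ * ‖A‖ * weakNorm 𝕜 p y) * ‖a‖ := fun a => by
    rw [hLnorm]
    calc _ ≤ C₂ * ‖A a‖ * weakNorm 𝕜 p y := (h₂ (A a) y hy).2
      _ ≤ C₂ * (‖A‖ * ‖a‖) * weakNorm 𝕜 p y := by
        gcongr
        exact A.le_opNorm a
      _ = _ := by ring
  let u := L.mkContinuous _ hbound
  have hu : ‖u‖ ≤ C₂ * ‖A‖ * weakNorm 𝕜 p y := L.mkContinuous_norm_le (by positivity) hbound
  have hupow : ∀ j, ‖u (x j)‖ ^ q = ∑' k, ‖A (x j) (y k)‖ ^ q := fun j => hLpow (x j)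
  obtain ⟨hsum, hle⟩ := h₁ u x hx
  simp only [hupow] at hsum hle
  refine ⟨(summable_prod_of_nonneg fun _ => Real.rpow_nonneg (norm_nonneg _) _).2
    ⟨fun j => (h₂ (A (x j)) y hy).1, hsum⟩, hle.trans ?_⟩
  calc C₁ * ‖u‖ * weakNorm 𝕜 r x
      ≤ C₁ * (C₂ * ‖A‖ * weakNorm 𝕜 p y) * weakNorm 𝕜 r x := by gcongr
    _ = _ := by ring
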